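/- (Schmidt decomposition / singular value expansion) Let H₁, H₂ be separable real Hilbert spaces and u ∈ H₁ ⊗ H₂ (Hilbert tensor product). Then there exist a nonincreasing, square-summable sequence of nonnegative reals (σ_i), an orthonormal family (ψ_i) in H₁, and an orthonormal family (φ_i) in H₂ such that u = Σ_{i=1}^∞ σ_i ψ_i ⊗ φ_i, with convergence in the norm of H₁ ⊗ H₂ and ‖u‖² = Σ_i σ_i². -/

import Mathlib

open scoped InnerProductSpace

/-- Hilbert–Schmidt bound for the operator norm. -/
lemma hs_norm_le {H₁ H₂ : Type*}
    [NormedAddCommGroup H₁] [InnerProductSpace ℝ H₁]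
    [NormedAddCommGroup H₂] [InnerProductSpace ℝ H₂]
    (e : HilbertBasis ℕ ℝ H₂) (v : H₂ →L[ℝ] H₁) (h : Summable fun i => ‖v (e i)‖ ^ 2) :
    ‖v‖ ≤ √(∑' i, ‖v (e i)‖ ^ 2) := by
  refine v.opNorm_le_bound (Real.sqrt_nonneg _) fun g => ?_
  have h1 : HasSum (fun i => e.repr g i • v (e i)) (v g) := by
    simpa using (e.hasSum_repr g).mapL v
  refine le_of_tendsto h1.norm (Filter.Eventually.of_forall fun s => ?_)
  calc ‖∑ i ∈ s, e.repr g i • v (e i)‖ ≤ ∑ i ∈ s, ‖e.repr g i • v (e i)‖ := norm_sum_le _ _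
    _ = ∑ i ∈ s, ‖v (e i)‖ * ‖⟪e i, g⟫_ℝ‖ := by
        refine Finset.sum_congr rfl fun i _ => ?_
        rw [norm_smul, e.repr_apply_apply, mul_comm]
    _ ≤ √(∑ i ∈ s, ‖v (e i)‖ ^ 2) * √(∑ i ∈ s, ‖⟪e i, g⟫_ℝ‖ ^ 2) :=
        Real.sum_mul_le_sqrt_mul_sqrt _ _ _
    _ ≤ √(∑' i, ‖v (e i)‖ ^ 2) * √(‖g‖ ^ 2) := by
        gcongr
        · exact h.sum_le_tsum s fun i _ => by positivity
        · exact e.orthonormal.sum_inner_products_le g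
    _ = _ := by rw [Real.sqrt_sq (norm_nonneg g)]

lemma hs_compact {H₁ H₂ : Type*}
    [NormedAddCommGroup H₁] [InnerProductSpace ℝ H₁] [CompleteSpace H₁]
    [NormedAddCommGroup H₂] [InnerProductSpace ℝ H₂]
    (e : HilbertBasis ℕ ℝ H₂) (u : H₂ →L[ℝ] H₁) (h : Summable fun i => ‖u (e i)‖ ^ 2) :
    IsCompactOperator u := by
  let P : ℕ → H₂ →L[ℝ] H₁ := fun n =>
    ∑ i ∈ Finset.range n, (innerSL ℝ (e i)).smulRight (u (e i))
  have hP : ∀ n j, P n (e j) = if j < n then u (e j) else 0 := by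
    intro n j
    simp only [P, ContinuousLinearMap.sum_apply, ContinuousLinearMap.smulRight_apply,
      innerSL_apply_apply, orthonormal_iff_ite.mp e.orthonormal]
    simp [Finset.sum_ite_eq, ite_smul]
  have hPc : ∀ n, IsCompactOperator (P n) := by
    intro n
    have : P n ∈ compactOperator (RingHom.id ℝ) H₂ H₁ := by
      refine Submodule.sum_mem _ fun i _ => ?_
      have h1 : IsCompactOperator (innerSL ℝ (e i)) :=
        isCompactOperator_of_locallyCompactSpace_dom (innerSL ℝ (e i))
      exact h1.clm_comp (ContinuousLinearMap.toSpanSingleton ℝ (u (e i)))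
    exact this
  have hd : ∀ n j, ‖(u - P n) (e j)‖ ^ 2 = if j < n then 0 else ‖u (e j)‖ ^ 2 := by
    intro n j
    rw [ContinuousLinearMap.sub_apply, hP]
    split_ifs <;> simp
  have hs : ∀ n, Summable fun j => ‖(u - P n) (e j)‖ ^ 2 := by
    intro n
    refine Summable.of_nonneg_of_le (fun _ => by positivity) (fun j => ?_) h
    rw [hd]
    split_ifs
    · positivity
    · exact le_rfl
  have ht : ∀ n, ∑' j, ‖(u - P n) (e j)‖ ^ 2 = ∑' j, ‖u (e (j + n))‖ ^ 2 := by
    intro n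
    rw [← (hs n).sum_add_tsum_nat_add n, Finset.sum_eq_zero, zero_add]
    · refine tsum_congr fun j => ?_
      rw [hd, if_neg (by omega)]
    · intro j hj
      rw [hd, if_pos (Finset.mem_range.mp hj)]
  refine isCompactOperator_of_tendsto (l := Filter.atTop) (F := P) (f := u) ?_
    (Filter.Eventually.of_forall hPc)
  rw [tendsto_iff_norm_sub_tendsto_zero]
  have h0 : Filter.Tendsto (fun n => √(∑' j, ‖u (e (j + n))‖ ^ 2)) Filter.atTop (nhds 0) := by
    have := (tendsto_sum_nat_add fun j => ‖u (e j)‖ ^ 2).sqrt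
    simpa using this
  refine squeeze_zero (fun _ => norm_nonneg _) (fun n => ?_) h0
  rw [norm_sub_rev, ← ht]
  exact hs_norm_le e _ (hs n)

/-- Hilbert basis of eigenvectors of a compact symmetric operator. -/
lemma exists_eigen_hilbertBasis.{v} {H : Type v}
    [NormedAddCommGroup H] [InnerProductSpace ℝ H] [CompleteSpace H]
    (T : H →L[ℝ] H) (hT : IsCompactOperator T) (hT' : T.IsSymmetric) :
    ∃ (ι : Type v) (b : HilbertBasis ι ℝ H) (μ : ι → ℝ), ∀ i, T (b i) = μ i • b i := by
  have hc : ∀ μ : ℝ, CompleteSpace (Module.End.eigenspace (T : Module.End ℝ H) μ) := by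
    intro μ
    have : IsClosed ((Module.End.eigenspace (T : Module.End ℝ H) μ : Submodule ℝ H) : Set H) := by
      have h1 : ((Module.End.eigenspace (T : Module.End ℝ H) μ : Submodule ℝ H) : Set H)
          = {x | T x = μ • x} := by
        ext x; simp [Module.End.mem_eigenspace_iff]
      rw [h1]
      exact isClosed_eq T.continuous (continuous_const_smul μ)
    exact this.completeSpace_coe
  choose w B hB using fun μ : ℝ =>
    exists_hilbertBasis ℝ (Module.End.eigenspace (T : Module.End ℝ H) μ)
  have ho := (LinearMap.IsSymmetric.orthogonalFamily_eigenspaces hT').orthonormal_sigma_orthonormal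
    (fun μ => (B μ).orthonormal)
  refine ⟨Σ μ : ℝ, w μ, HilbertBasis.mkOfOrthogonalEqBot ho ?_, fun i => i.1, ?_⟩
  · rw [Submodule.eq_bot_iff]
    intro x hx
    have hx' : x ∈ (⨆ μ, Module.End.eigenspace (T : Module.End ℝ H) μ)ᗮ := by
      rw [← Submodule.iInf_orthogonal, Submodule.mem_iInf]
      intro μ
      rw [Submodule.mem_orthogonal]
      intro y hy
      have h1 := ((B μ).hasSum_repr ⟨y, hy⟩).mapL (Submodule.subtypeL _)
      have h2 := h1.mapL (innerSL ℝ x)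
      have h3 : ∀ i, ⟪x, (B μ i : H)⟫_ℝ = 0 := by
        intro i
        rw [real_inner_comm]
        exact (Submodule.mem_orthogonal _ _).mp hx _ (Submodule.subset_span ⟨⟨μ, i⟩, rfl⟩)
      rw [real_inner_comm]
      refine h2.unique ?_
      have hz : (fun i => innerSL ℝ x ((Submodule.subtypeL
          (Module.End.eigenspace (T : Module.End ℝ H) μ)) ((B μ).repr ⟨y, hy⟩ i • B μ i)))
          = fun _ => (0 : ℝ) := by
        funext i
        simp [h3, inner_smul_right]
      rw [hz]
      exact hasSum_zero
    rw [ContinuousLinearMap.orthogonalComplement_iSup_eigenspaces_eq_bot hT hT'] at hx'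
    simpa using hx'
  · intro i
    rw [HilbertBasis.coe_mkOfOrthogonalEqBot]
    exact Module.End.mem_eigenspace_iff.mp (B i.1 i.2).2

/-- Decreasing rearrangement of a nonnegative summable family. -/
lemma exists_rearrangement {ι : Type*} [Infinite ι] (f : ι → ℝ) (hf : ∀ i, 0 ≤ f i)
    (hs : Summable f) :
    ∃ k : ℕ → ι, Function.Injective k ∧ Antitone (f ∘ k) ∧ ∀ j, j ∉ Set.range k → f j = 0 := by
  classical
  have step : ∀ s : Finset ι, ∃ i, i ∉ s ∧ ∀ j, j ∉ s → f j ≤ f i := by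
    intro s
    by_cases h : ∃ j, j ∉ s ∧ 0 < f j
    · obtain ⟨j, hj, hpos⟩ := h
      have hfin : {i | f j ≤ f i}.Finite := by
        have := hs.tendsto_cofinite_zero.eventually_lt_const hpos
        simpa [Filter.eventually_cofinite] using this
      have hfin' : {i | i ∉ s ∧ f j ≤ f i}.Finite := hfin.subset fun i hi => hi.2
      obtain ⟨i, hi, hmax⟩ := hfin'.exists_maximalFor f _ ⟨j, hj, le_rfl⟩
      refine ⟨i, hi.1, fun l hl => ?_⟩
      by_contra! hlt
      have := hmax (j := l) ⟨hl, hi.2.trans hlt.le⟩ hlt.le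
      linarith
    · push Not at h
      obtain ⟨i, hi⟩ := Infinite.exists_notMem_finset s
      exact ⟨i, hi, fun j hj => (h j hj).trans (hf i)⟩
  choose c hc hmax using step
  let S : ℕ → Finset ι := fun n => Nat.rec ∅ (fun _ s => insert (c s) s) n
  have hS : ∀ n, S (n + 1) = insert (c (S n)) (S n) := fun n => rfl
  have hmono : Monotone S := monotone_nat_of_le_succ fun n => by
    rw [hS]; exact Finset.subset_insert _ _
  have hlt : ∀ m n, m < n → c (S m) ∈ S n := fun m n h =>
    hmono (Nat.succ_le_of_lt h) (by rw [Nat.succ_eq_add_one, hS]; exact Finset.mem_insert_self _ _)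
  have hSr : ∀ n j, j ∈ S n → j ∈ Set.range fun n => c (S n) := by
    intro n
    induction n with
    | zero => intro j hj; simp [S] at hj
    | succ n ih =>
      intro j hj
      rw [hS, Finset.mem_insert] at hj
      rcases hj with rfl | hj
      · exact ⟨n, rfl⟩
      · exact ih j hj
  have hinj : Function.Injective fun n => c (S n) := by
    intro m n h
    by_contra hne
    rcases lt_or_gt_of_ne hne with h' | h'
    · exact hc (S n) (by have := hlt m n h'; simp only at h; rwa [h] at this)
    · exact hc (S m) (by have := hlt n m h'; simp only at h; rwa [← h] at this)
  refine ⟨fun n => c (S n), hinj, ?_, ?_⟩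
  · exact antitone_nat_of_succ_le fun n =>
      hmax _ _ fun h => hc (S (n + 1)) (hmono (Nat.le_succ n) h)
  · intro j hj
    have ht := (hs.comp_injective hinj).tendsto_atTop_zero
    exact le_antisymm (ge_of_tendsto ht (Filter.Eventually.of_forall fun n =>
      hmax _ _ fun h => hj (hSr n j h))) (hf j)

/-- Schmidt decomposition / singular value expansion: identifying the
Hilbert tensor product `H₁ ⊗ H₂` with the Hilbert–Schmidt operators `H₂ → H₁`
(with `ψ ⊗ φ` corresponding to `g ↦ ⟪φ, g⟫ • ψ`), every `u ∈ H₁ ⊗ H₂` admits an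
expansion `u = Σ σ_i ψ_i ⊗ φ_i` with `(σ_i)` nonincreasing, nonnegative and
square-summable, `(ψ_i)`, `(φ_i)` orthonormal (where `σ_i ≠ 0`), convergence in norm
(`HasSum` pointwise for the associated operator) and `‖u‖² = Σ σ_i²` (Hilbert–Schmidt
norm). -/
theorem stmt9 {H₁ H₂ : Type*}
    [NormedAddCommGroup H₁] [InnerProductSpace ℝ H₁] [CompleteSpace H₁]
    [TopologicalSpace.SeparableSpace H₁]
    [NormedAddCommGroup H₂] [InnerProductSpace ℝ H₂] [CompleteSpace H₂]
    (e : HilbertBasis ℕ ℝ H₂)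
    (u : H₂ →L[ℝ] H₁) (hHS : Summable fun i => ‖u (e i)‖ ^ 2) :
    ∃ (σ : ℕ → ℝ) (ψ : ℕ → H₁) (φ : ℕ → H₂),
      Antitone σ ∧ (∀ i, 0 ≤ σ i) ∧ Summable (fun i => σ i ^ 2) ∧
      Orthonormal ℝ (fun i : {i : ℕ // σ i ≠ 0} => ψ i) ∧
      Orthonormal ℝ (fun i : {i : ℕ // σ i ≠ 0} => φ i) ∧
      (∀ g : H₂, HasSum (fun i => (σ i * ⟪φ i, g⟫_ℝ) • ψ i) (u g)) ∧
      (∑' i, ‖u (e i)‖ ^ 2) = ∑' i, σ i ^ 2 := by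
  have hcu := hs_compact e u hHS
  let T : H₂ →L[ℝ] H₂ := (ContinuousLinearMap.adjoint u).comp u
  have hTi : ∀ x y, ⟪T x, y⟫_ℝ = ⟪u x, u y⟫_ℝ := fun x y => by
    simp [T, ContinuousLinearMap.adjoint_inner_left]
  have hTc : IsCompactOperator T := hcu.clm_comp (ContinuousLinearMap.adjoint u)
  have hTs : T.IsSymmetric := fun x y => by
    change ⟪T x, y⟫_ℝ = ⟪x, T y⟫_ℝ
    rw [hTi, real_inner_comm, ← hTi, real_inner_comm]
  obtain ⟨ι, b, μ, hb⟩ := exists_eigen_hilbertBasis T hTc hTs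
  have hbu : ∀ j g, ⟪u (b j), u g⟫_ℝ = μ j * ⟪b j, g⟫_ℝ := fun j g => by
    rw [← hTi, hb, real_inner_smul_left]
  have hb1 : ∀ j, ⟪b j, b j⟫_ℝ = 1 := fun j => by
    rw [real_inner_self_eq_norm_sq, b.orthonormal.1 j, one_pow]
  have hμ : ∀ j, μ j = ‖u (b j)‖ ^ 2 := fun j => by
    rw [← real_inner_self_eq_norm_sq, hbu, hb1, mul_one]
  have hexp : ∀ g, HasSum (fun j => ⟪b j, g⟫_ℝ • u (b j)) (u g) := fun g => by
    have := (b.hasSum_repr g).mapL u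
    simpa [b.repr_apply_apply] using this
  have hnorm : ∀ g, HasSum (fun j => ⟪b j, g⟫_ℝ ^ 2 * μ j) (‖u g‖ ^ 2) := fun g => by
    have := (hexp g).mapL (innerSL ℝ (u g))
    rw [innerSL_apply_apply, real_inner_self_eq_norm_sq] at this
    have hfe : (fun j => ⟪b j, g⟫_ℝ ^ 2 * μ j)
        = fun j => innerSL ℝ (u g) (⟪b j, g⟫_ℝ • u (b j)) := by
      funext j
      rw [innerSL_apply_apply, real_inner_smul_right, real_inner_comm (u (b j)) (u g), hbu]
      ring
    rw [hfe]
    exact this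
  have hinf : Infinite ι := by
    by_contra hfin
    rw [not_infinite_iff_finite] at hfin
    have := Fintype.ofFinite ι
    have hfd : FiniteDimensional ℝ H₂ := b.toOrthonormalBasis.toBasis.finiteDimensional_of_finite
    have := e.orthonormal.linearIndependent.finite
    exact not_finite ℕ
  let F : ℕ × ι → ℝ := fun p => ⟪b p.2, e p.1⟫_ℝ ^ 2 * μ p.2
  have hF0 : 0 ≤ F := fun p => by
    have : 0 ≤ μ p.2 := by rw [hμ]; positivity
    change 0 ≤ ⟪b p.2, e p.1⟫_ℝ ^ 2 * μ p.2
    positivity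
  have hFs : Summable F := by
    rw [summable_prod_of_nonneg hF0]
    refine ⟨fun i => (hnorm (e i)).summable, ?_⟩
    convert hHS using 2 with i
    exact (hnorm (e i)).tsum_eq
  have hS1 : HasSum (fun i => ‖u (e i)‖ ^ 2) (∑' p, F p) :=
    hFs.hasSum.prod_fiberwise fun i => hnorm (e i)
  have hS2 : HasSum μ (∑' p, F p) := by
    have h1 : HasSum (F ∘ Prod.swap) (∑' p, F p) :=
      (Equiv.prodComm ι ℕ).hasSum_iff.mpr hFs.hasSum
    refine h1.prod_fiberwise fun j => ?_
    have h2 := (e.hasSum_inner_mul_inner (b j) (b j)).mul_right (μ j)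
    rw [hb1, one_mul] at h2
    have hfe : (fun i => (F ∘ Prod.swap) (j, i))
        = fun i => ⟪b j, e i⟫_ℝ * ⟪e i, b j⟫_ℝ * μ j := by
      funext i
      change ⟪b j, e i⟫_ℝ ^ 2 * μ j = _
      rw [real_inner_comm (b j) (e i)]
      ring
    rw [hfe]
    exact h2
  have hμ0 : ∀ j, 0 ≤ μ j := fun j => by rw [hμ]; positivity
  obtain ⟨k, hk, hanti, hzero⟩ := exists_rearrangement μ hμ0 hS2.summable
  have hS3 : HasSum (fun n => ‖u (b (k n))‖ ^ 2) (∑' p, F p) := by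
    have := (hk.hasSum_iff hzero).mpr hS2
    convert this using 2 with n
    exact (hμ _).symm
  refine ⟨fun n => ‖u (b (k n))‖, fun n => ‖u (b (k n))‖⁻¹ • u (b (k n)), fun n => b (k n),
    ?_, fun _ => norm_nonneg _, hS3.summable, ?_, ?_, ?_, ?_⟩
  · intro m n hmn
    have := hanti hmn
    simp only [Function.comp, hμ] at this
    exact (pow_le_pow_iff_left₀ (norm_nonneg _) (norm_nonneg _) two_ne_zero).mp this
  · refine ⟨fun i => ?_, fun i j hij => ?_⟩
    · rw [norm_smul, norm_inv, norm_norm]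
      exact inv_mul_cancel₀ i.2
    · have hne : k i ≠ k j := fun h => hij (Subtype.ext (hk h))
      change ⟪_, _⟫_ℝ = 0
      rw [real_inner_smul_left, real_inner_smul_right, hbu, b.orthonormal.2 hne]
      simp
  · exact b.orthonormal.comp _ (hk.comp Subtype.val_injective)
  · intro g
    have h0 : ∀ j, j ∉ Set.range k → ⟪b j, g⟫_ℝ • u (b j) = 0 := fun j hj => by
      have h1 := hzero j hj
      rw [hμ] at h1
      have h2 : u (b j) = 0 := by simpa using h1
      rw [h2, smul_zero]
    have := (hk.hasSum_iff h0).mpr (hexp g)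
    convert this using 2 with n
    simp only [Function.comp, smul_smul]
    by_cases hz : u (b (k n)) = 0
    · simp [hz]
    · have : ‖u (b (k n))‖ ≠ 0 := norm_ne_zero_iff.mpr hz
      congr 1
      field_simp
  · rw [hS1.tsum_eq, hS3.tsum_eq]
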